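/- Let F ⊂ ℝ² be a finite set whose convex hull has nonempty interior, let Ω be the interior of the convex hull of F, let S be the set of extreme points of the closure of Ω, and let η(x) = dist(x, S). Then there exists a constant κ > 0, depending only on Ω, such that for every function u : ℝ² → ℝ that is continuous on the closure of Ω, continuously differentiable on Ω, and satisfies u = 0 on ∂Ω, one has ∫_Ω u(x)²/η(x)² dx + ∫_Ω ‖∇u(x)‖² dx ≤ κ ∫_Ω ‖∇u(x)‖² dx (an inequality in the extended nonnegative reals). -/

import Mathlib

open MeasureTheory Metric Set

/-!
At a vertex `v` of a polytope, some linear functional `l` is comparable with the distance to `v`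
throughout the polytope: `dist x v ≤ l (x - v) ≤ ‖l‖ * dist x v`. In a unit direction `e` with
`l e = 0`, the ray from `x` therefore leaves `Ω` within length `2 * l (x - v)`. Integrating the
derivative of `u` up to the exit point, where `u` vanishes, and applying Jensen's inequality bounds
`(‖u x‖ / (2 * l (x - v))) ^ p` by the average of `‖∂ₑu‖ ^ p` over the initial segment of that
length, `u` being extended by zero. As `l` is constant in the direction `e`, the shear
`(x, t) ↦ (x + t • e, t)` preserves both the measure and the lengths of these segments, so
integrating the averages over `x` gives at most the integral of `‖∂ₑu‖ ^ p`. Finally, one sums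
over the finitely many vertices.
-/

open scoped ENNReal

section OneVariable

theorem lintegral_rpow_le_measure_univ_rpow_mul_lintegral_rpow {α : Type*} [MeasurableSpace α]
    {μ : Measure α} {f : α → ℝ≥0∞} (hf : AEMeasurable f μ) {p : ℝ} (hp : 1 ≤ p) :
    (∫⁻ x, f x ∂μ) ^ p ≤ μ univ ^ (p - 1) * ∫⁻ x, f x ^ p ∂μ := by
  have hp₀ : 0 < p := one_pos.trans_le hp
  have holder := eLpNorm'_le_eLpNorm'_mul_rpow_measure_univ one_pos hp hf.aestronglyMeasurable
  simp only [eLpNorm', enorm_eq_self, ENNReal.rpow_one, div_one] at holder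
  calc (∫⁻ x, f x ∂μ) ^ p
      ≤ ((∫⁻ x, f x ^ p ∂μ) ^ (1 / p) * μ univ ^ (1 - 1 / p)) ^ p := by gcongr
    _ = μ univ ^ (p - 1) * ∫⁻ x, f x ^ p ∂μ := by
      rw [ENNReal.mul_rpow_of_nonneg _ _ hp₀.le, ← ENNReal.rpow_mul, ← ENNReal.rpow_mul,
        one_div_mul_cancel hp₀.ne', ENNReal.rpow_one, sub_mul, one_div_mul_cancel hp₀.ne',
        one_mul, mul_comm]

theorem lintegral_div_rpow_le_lintegral_rpow_div {α : Type*} [MeasurableSpace α]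
    {μ : Measure α} {f : α → ℝ≥0∞} (hf : AEMeasurable f μ) {p : ℝ} (hp : 1 ≤ p) {m : ℝ≥0∞}
    (hμm : μ univ ≤ m) (hm₀ : m ≠ 0) (hm : m ≠ ∞) :
    ((∫⁻ x, f x ∂μ) / m) ^ p ≤ (∫⁻ x, f x ^ p ∂μ) / m := by
  have : 0 ≤ p - 1 := sub_nonneg.2 hp
  calc ((∫⁻ x, f x ∂μ) / m) ^ p
      = (∫⁻ x, f x ∂μ) ^ p / m ^ p := ENNReal.div_rpow_of_nonneg _ _ (by linarith)
    _ ≤ (m ^ (p - 1) * ∫⁻ x, f x ^ p ∂μ) / m ^ p := by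
      gcongr
      exact (lintegral_rpow_le_measure_univ_rpow_mul_lintegral_rpow hf hp).trans (by gcongr)
    _ = (m ^ (p - 1) * ∫⁻ x, f x ^ p ∂μ) / (m ^ (p - 1) * m) := by
      rw [ENNReal.rpow_sub _ _ hm₀ hm, ENNReal.rpow_one, ENNReal.div_mul_cancel hm₀ hm]
    _ = (∫⁻ x, f x ^ p ∂μ) / m :=
      ENNReal.mul_div_mul_left _ _ (by simp [hm₀, hm]) (by simp [hm₀, hm])

variable {G : Type*} [NormedAddCommGroup G] [NormedSpace ℝ G] [CompleteSpace G] {f : ℝ → G}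

theorem enorm_sub_le_lintegral_enorm_deriv {a b : ℝ} (hab : a ≤ b)
    (hc : ContinuousOn f (Icc a b)) (hd : DifferentiableOn ℝ f (Ioo a b)) :
    ‖f b - f a‖ₑ ≤ ∫⁻ t in Ioo a b, ‖deriv f t‖ₑ := by
  rw [restrict_Ioo_eq_restrict_Ioc]
  by_cases hfin : ∫⁻ t in Ioc a b, ‖deriv f t‖ₑ = ∞
  · exact hfin ▸ le_top
  have hint : IntervalIntegrable (deriv f) volume a b :=
    (intervalIntegrable_iff_integrableOn_Ioc_of_le hab).2
      ⟨(stronglyMeasurable_deriv f).aestronglyMeasurable, lt_top_iff_ne_top.2 hfin⟩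
  have hderiv (t : ℝ) (ht : t ∈ Ioo a b) : HasDerivAt f (deriv f t) t :=
    (hd.differentiableAt (isOpen_Ioo.mem_nhds ht)).hasDerivAt
  rw [← intervalIntegral.integral_eq_sub_of_hasDerivAt_of_le hab hc hderiv hint,
    intervalIntegral.integral_of_le hab]
  exact enorm_integral_le_lintegral_enorm _

theorem exists_mem_frontier_Ico_subset {U : Set ℝ} (hU : IsOpen U) {b c : ℝ} (hb : b ∈ U)
    (hc : c ∈ upperBounds U) : ∃ a ∈ Ioc b c, a ∈ frontier U ∧ Ico b a ⊆ U := by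
  set s := Uᶜ ∩ Ici b
  have hs : IsClosed s := hU.isClosed_compl.inter isClosed_Ici
  have hs_ne : s.Nonempty := ⟨c + 1, fun h => by linarith [hc h], by
    simp only [mem_Ici]; linarith [hc hb]⟩
  have hs_bdd : BddBelow s := ⟨b, fun _ ht => ht.2⟩
  obtain ⟨haU, hba⟩ : sInf s ∈ s := hs.csInf_mem hs_ne hs_bdd
  have hba : b < sInf s := lt_of_le_of_ne hba fun h => haU (h ▸ hb)
  have hsub : Ico b (sInf s) ⊆ U := fun t ht => by
    by_contra htU
    exact ht.2.not_ge (csInf_le hs_bdd ⟨htU, ht.1⟩)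
  have ha_cl : sInf s ∈ closure U :=
    closure_mono hsub (by simpa [closure_Ico hba.ne] using hba.le)
  exact ⟨sInf s, ⟨hba, closure_minimal hc isClosed_Iic ha_cl⟩, by
    rw [hU.frontier_eq]; exact ⟨ha_cl, haU⟩, hsub⟩

theorem enorm_div_rpow_le_lintegral_enorm_deriv_rpow_div {U : Set ℝ} (hU : IsOpen U)
    (hfc : ContinuousOn f (closure U)) (hfd : DifferentiableOn ℝ f U)
    (hf₀ : ∀ t ∈ frontier U, f t = 0) {b c : ℝ} (hb : b ∈ U) (hc : c ∈ upperBounds U)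
    {p : ℝ} (hp : 1 ≤ p) :
    (‖f b‖ₑ / ENNReal.ofReal (c - b)) ^ p ≤
      (∫⁻ t in U ∩ Icc b c, ‖deriv f t‖ₑ ^ p) / ENNReal.ofReal (c - b) := by
  obtain ⟨a, ⟨hba, hac⟩, haU, hsub⟩ := exists_mem_frontier_Ico_subset hU hb hc
  have hbc : 0 < c - b := sub_pos.2 (hba.trans_le hac)
  have ftc : ‖f b‖ₑ ≤ ∫⁻ t in U ∩ Icc b c, ‖deriv f t‖ₑ := calc
    ‖f b‖ₑ = ‖f a - f b‖ₑ := by rw [hf₀ a haU, zero_sub, enorm_neg]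
    _ ≤ ∫⁻ t in Ioo b a, ‖deriv f t‖ₑ :=
      enorm_sub_le_lintegral_enorm_deriv hba.le
        (hfc.mono (closure_Ico hba.ne ▸ closure_mono hsub))
        (hfd.mono (Ioo_subset_Ico_self.trans hsub))
    _ ≤ ∫⁻ t in U ∩ Icc b c, ‖deriv f t‖ₑ := lintegral_mono_set fun t ht =>
      ⟨hsub (Ioo_subset_Ico_self ht), ht.1.le, ht.2.le.trans hac⟩
  have hlength : volume.restrict (U ∩ Icc b c) univ ≤ ENNReal.ofReal (c - b) := by
    rw [Measure.restrict_apply_univ]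
    exact (measure_mono inter_subset_right).trans Real.volume_Icc.le
  calc (‖f b‖ₑ / ENNReal.ofReal (c - b)) ^ p
      ≤ ((∫⁻ t in U ∩ Icc b c, ‖deriv f t‖ₑ) / ENNReal.ofReal (c - b)) ^ p := by gcongr
    _ ≤ (∫⁻ t in U ∩ Icc b c, ‖deriv f t‖ₑ ^ p) / ENNReal.ofReal (c - b) :=
      lintegral_div_rpow_le_lintegral_rpow_div (stronglyMeasurable_deriv f).enorm.aemeasurable hp
        hlength (ENNReal.ofReal_pos.2 hbc).ne' ENNReal.ofReal_ne_top

end OneVariable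

section Shear

theorem lintegral_lintegral_add_right {E T : Type*} [MeasurableSpace E] [AddGroup E]
    [MeasurableAdd₂ E] {μ : Measure E} [SFinite μ] [μ.IsAddRightInvariant] [MeasurableSpace T]
    {ν : Measure T} [SFinite ν] {φ : T → E} (hφ : Measurable φ) {f : E → T → ℝ≥0∞}
    (hf : Measurable (Function.uncurry f)) :
    ∫⁻ x, ∫⁻ t, f (x + φ t) t ∂ν ∂μ = ∫⁻ x, ∫⁻ t, f x t ∂ν ∂μ := by
  have hf' : Measurable (Function.uncurry fun x t => f (x + φ t) t) :=
    hf.comp ((measurable_fst.add (hφ.comp measurable_snd)).prodMk measurable_snd)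
  calc ∫⁻ x, ∫⁻ t, f (x + φ t) t ∂ν ∂μ
      = ∫⁻ t, ∫⁻ x, f (x + φ t) t ∂μ ∂ν := lintegral_lintegral_swap hf'.aemeasurable
    _ = ∫⁻ t, ∫⁻ x, f x t ∂μ ∂ν := by
      congr with t; exact lintegral_add_right_eq_self (fun x => f x t) (φ t)
    _ = ∫⁻ x, ∫⁻ t, f x t ∂ν ∂μ := (lintegral_lintegral_swap hf.aemeasurable).symm

theorem lintegral_ray_average_le {E : Type*} [NormedAddCommGroup E] [NormedSpace ℝ E]
    [SecondCountableTopology E] [MeasurableSpace E] [BorelSpace E] {μ : Measure E} [SFinite μ]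
    [μ.IsAddRightInvariant] {g : E → ℝ≥0∞} (hg : Measurable g) {e : E} {r : E → ℝ}
    (hr : Measurable r) (hre : ∀ (x : E) (t : ℝ), r (x + t • e) = r x) :
    ∫⁻ x, (∫⁻ t in Icc 0 (r x), g (x + t • e)) / ENNReal.ofReal (r x) ∂μ ≤ ∫⁻ x, g x ∂μ := by
  set f : E → ℝ → ℝ≥0∞ := fun x =>
    (Icc 0 (r x)).indicator fun _ => g x / ENNReal.ofReal (r x)
  have hf : Measurable (Function.uncurry f) := by
    have hA : MeasurableSet {q : E × ℝ | q.2 ∈ Icc 0 (r q.1)} :=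
      (measurableSet_le measurable_const measurable_snd).inter
        (measurableSet_le measurable_snd (hr.comp measurable_fst))
    exact Measurable.indicator (f := fun q : E × ℝ => g q.1 / ENNReal.ofReal (r q.1))
      (by fun_prop) hA
  calc ∫⁻ x, (∫⁻ t in Icc 0 (r x), g (x + t • e)) / ENNReal.ofReal (r x) ∂μ
      = ∫⁻ x, (∫⁻ t, f (x + t • e) t) ∂μ := by
        congr with x
        simp only [f, hre, div_eq_mul_inv]
        rw [← lintegral_mul_const _ (by fun_prop)]
        exact (lintegral_indicator measurableSet_Icc _).symm
    _ = ∫⁻ x, (∫⁻ t, f x t) ∂μ := lintegral_lintegral_add_right (by fun_prop) hf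
    _ ≤ ∫⁻ x, g x ∂μ := lintegral_mono fun x => by
      simp only [f]
      rw [lintegral_indicator_const measurableSet_Icc, Real.volume_Icc, sub_zero, mul_comm]
      exact ENNReal.mul_div_le

end Shear

section Geometry

theorem exists_norm_eq_one_map_eq_zero {E : Type*} [NormedAddCommGroup E] [NormedSpace ℝ E]
    (hE : 1 < Module.finrank ℝ E) (l : E →L[ℝ] ℝ) : ∃ e : E, ‖e‖ = 1 ∧ l e = 0 := by
  have : FiniteDimensional ℝ E := .of_finrank_pos (one_pos.trans hE)
  have hker : (l : E →ₗ[ℝ] ℝ).ker ≠ ⊥ := LinearMap.ker_ne_bot_of_finrank_lt (by simpa using hE)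
  have : Nontrivial (l : E →ₗ[ℝ] ℝ).ker := Submodule.nontrivial_iff_ne_bot.2 hker
  obtain ⟨e, he⟩ := exists_norm_eq (l : E →ₗ[ℝ] ℝ).ker zero_le_one
  exact ⟨e, he, e.2⟩

theorem ofReal_div_infDist_rpow_le_sum {X : Type*} [PseudoMetricSpace X] (S : Finset X) (x : X)
    (a : ℝ) {p : ℝ} (hp : 0 < p) :
    ENNReal.ofReal ((a / infDist x S) ^ p) ≤ ∑ v ∈ S, ENNReal.ofReal ((a / dist x v) ^ p) := by
  rcases S.eq_empty_or_nonempty with rfl | hS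
  · simp [hp.ne']
  obtain ⟨v, hv, hxv⟩ := S.finite_toSet.isCompact.exists_infDist_eq_dist hS x
  rw [hxv]
  exact Finset.single_le_sum (f := fun v => ENNReal.ofReal ((a / dist x v) ^ p))
    (fun _ _ => zero_le) hv

theorem ofReal_norm_div_rpow_le_mul_enorm_div_rpow {G : Type*} [SeminormedAddCommGroup G] (w : G)
    {d r C : ℝ} (hd : 0 ≤ d) (hdr : d ≤ r) (hrC : r ≤ C * d) {p : ℝ} (hp : 0 < p) :
    ENNReal.ofReal ((‖w‖ / d) ^ p) ≤ ENNReal.ofReal (C ^ p) * (‖w‖ₑ / ENNReal.ofReal r) ^ p := by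
  rcases hd.eq_or_lt with rfl | hd
  -- Division by zero makes the left-hand side `0`.
  · simp [hp.ne']
  have hr : 0 < r := hd.trans_le hdr
  have hC : 0 < C := pos_of_mul_pos_left (hr.trans_le hrC) hd.le
  have hdiv : ‖w‖ / d ≤ C * (‖w‖ / r) := calc
    ‖w‖ / d = ‖w‖ * r / (d * r) := (mul_div_mul_right _ _ hr.ne').symm
    _ ≤ ‖w‖ * (C * d) / (d * r) := by gcongr
    _ = C * (‖w‖ / r) := by field_simp
  rw [← ofReal_norm, ← ENNReal.ofReal_div_of_pos hr, ENNReal.ofReal_rpow_of_nonneg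
    (by positivity) hp.le, ← ENNReal.ofReal_mul (by positivity),
    ← Real.mul_rpow hC.le (by positivity)]
  gcongr

theorem exists_dist_le_map_sub_of_mem_extremePoints {E : Type*}
    [NormedAddCommGroup E] [NormedSpace ℝ E] {F : Set E} (hF : F.Finite) {v : E}
    (hv : v ∈ (convexHull ℝ F).extremePoints ℝ) :
    ∃ l : E →L[ℝ] ℝ, ∀ x ∈ convexHull ℝ F, dist x v ≤ l (x - v) := by
  have hv' : v ∉ convexHull ℝ (F \ {v}) := fun h =>
    ((convex_convexHull ℝ F).mem_extremePoints_iff_mem_sdiff_convexHull_sdiff.1 hv).2 <|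
      convexHull_mono (sdiff_subset_sdiff_left (subset_convexHull ℝ F)) h
  obtain ⟨l, r, hlv, hlr⟩ := geometric_hahn_banach_point_closed
    (convex_convexHull ℝ (F \ {v})) (hF.sdiff.isCompact_convexHull ℝ).isClosed hv'
  obtain ⟨R, hR₀, hFR⟩ := hF.isBounded.subset_closedBall_lt 0 v
  have hgap : 0 < r - l v := sub_pos.2 hlv
  set l' : E →L[ℝ] ℝ := (R / (r - l v)) • l
  have hconv : Convex ℝ {x | dist x v ≤ l' (x - v)} := by
    have h := ((convexOn_univ_dist v).sub (l'.toLinearMap.concaveOn convex_univ)).convex_le (-l' v)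
    convert h using 1
    ext x
    simp [le_sub_iff_add_le']
  refine ⟨l', fun x hx => convexHull_min (fun y hy => ?_) hconv hx⟩
  rcases eq_or_ne y v with rfl | hyv
  · simp
  have hly : r < l y := hlr y (subset_convexHull ℝ _ ⟨hy, hyv⟩)
  calc dist y v ≤ R := hFR hy
    _ = R / (r - l v) * (r - l v) := (div_mul_cancel₀ _ hgap.ne').symm
    _ ≤ R / (r - l v) * (l y - l v) := by gcongr
    _ = l' (y - v) := by simp [l']

end Geometry

section Domain

variable {E G : Type*} [NormedAddCommGroup E] [NormedSpace ℝ E] [NormedAddCommGroup G]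
  [NormedSpace ℝ G] [CompleteSpace G] {Ω : Set E} {u : E → G} {p : ℝ}

theorem enorm_div_rpow_le_lintegral_ray_div (hΩ : IsOpen Ω) (huc : ContinuousOn u (closure Ω))
    (hud : DifferentiableOn ℝ u Ω) (hu₀ : ∀ x ∈ frontier Ω, u x = 0) (hp : 1 ≤ p) {x e : E}
    (hx : x ∈ Ω) {R : ℝ} (hR : ∀ t : ℝ, x + t • e ∈ Ω → t ≤ R) :
    (‖u x‖ₑ / ENNReal.ofReal R) ^ p ≤
      (∫⁻ t in Icc 0 R, Ω.indicator (fun y => ‖fderiv ℝ u y e‖ₑ ^ p) (x + t • e)) /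
        ENNReal.ofReal R := by
  set γ : ℝ → E := fun t => x + t • e
  have hγ : Continuous γ := by fun_prop
  have hU : IsOpen (γ ⁻¹' Ω) := hΩ.preimage hγ
  have hderiv (t : ℝ) (ht : t ∈ γ ⁻¹' Ω) : HasDerivAt (u ∘ γ) (fderiv ℝ u (γ t) e) t :=
    (hud.differentiableAt (hΩ.mem_nhds ht)).hasFDerivAt.comp_hasDerivAt t
      (by simpa [γ] using ((hasDerivAt_id t).smul_const e).const_add x)
  have ray := enorm_div_rpow_le_lintegral_enorm_deriv_rpow_div (f := u ∘ γ) (b := 0) hU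
    (huc.comp hγ.continuousOn (hγ.closure_preimage_subset Ω))
    (fun t ht => (hderiv t ht).differentiableAt.differentiableWithinAt)
    (fun t ht => hu₀ _ (hγ.frontier_preimage_subset Ω ht)) (by simpa [γ] using hx) hR hp
  simp only [γ, Function.comp_apply, zero_smul, add_zero, sub_zero] at ray
  refine ray.trans_eq (congrArg (· / _) ?_)
  rw [← setLIntegral_indicator hU.measurableSet]
  congr with t
  by_cases ht : t ∈ γ ⁻¹' Ω
  · rw [indicator_of_mem ht, indicator_of_mem (show γ t ∈ Ω from ht), (hderiv t ht).deriv]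
  · rw [indicator_of_notMem ht, indicator_of_notMem (show γ t ∉ Ω from ht)]

variable [SecondCountableTopology E] [MeasurableSpace E] [BorelSpace E] {μ : Measure E}
  [SFinite μ] [μ.IsAddRightInvariant]

theorem lintegral_enorm_div_width_rpow_le (hΩ : IsOpen Ω) (huc : ContinuousOn u (closure Ω))
    (hud : DifferentiableOn ℝ u Ω) (hu₀ : ∀ x ∈ frontier Ω, u x = 0) (hp : 1 ≤ p) {e : E}
    {r : E → ℝ} (hr : Measurable r) (hre : ∀ (x : E) (t : ℝ), r (x + t • e) = r x)
    (hrΩ : ∀ x ∈ Ω, ∀ t : ℝ, x + t • e ∈ Ω → t ≤ r x) :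
    ∫⁻ x in Ω, (‖u x‖ₑ / ENNReal.ofReal (r x)) ^ p ∂μ ≤ ∫⁻ x in Ω, ‖fderiv ℝ u x e‖ₑ ^ p ∂μ := by
  borelize G
  set g : E → ℝ≥0∞ := Ω.indicator fun y => ‖fderiv ℝ u y e‖ₑ ^ p
  have hg : Measurable g :=
    ((measurable_fderiv_apply_const ℝ u e).enorm.pow_const p).indicator hΩ.measurableSet
  calc ∫⁻ x in Ω, (‖u x‖ₑ / ENNReal.ofReal (r x)) ^ p ∂μ
      ≤ ∫⁻ x in Ω, (∫⁻ t in Icc 0 (r x), g (x + t • e)) / ENNReal.ofReal (r x) ∂μ :=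
      setLIntegral_mono' hΩ.measurableSet fun x hx =>
        enorm_div_rpow_le_lintegral_ray_div hΩ huc hud hu₀ hp hx (hrΩ x hx)
    _ ≤ ∫⁻ x, (∫⁻ t in Icc 0 (r x), g (x + t • e)) / ENNReal.ofReal (r x) ∂μ :=
      setLIntegral_le_lintegral _ _
    _ ≤ ∫⁻ x, g x ∂μ := lintegral_ray_average_le hg hr hre
    _ = ∫⁻ x in Ω, ‖fderiv ℝ u x e‖ₑ ^ p ∂μ := lintegral_indicator hΩ.measurableSet _

theorem lintegral_norm_div_dist_rpow_le (hE : 1 < Module.finrank ℝ E) (hΩ : IsOpen Ω)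
    (huc : ContinuousOn u (closure Ω)) (hud : DifferentiableOn ℝ u Ω)
    (hu₀ : ∀ x ∈ frontier Ω, u x = 0) (hp : 1 ≤ p) {v : E} {l : E →L[ℝ] ℝ}
    (hl : ∀ x ∈ Ω, dist x v ≤ l (x - v)) :
    ∫⁻ x in Ω, ENNReal.ofReal ((‖u x‖ / dist x v) ^ p) ∂μ ≤
      ENNReal.ofReal ((2 * ‖l‖) ^ p) * ∫⁻ x in Ω, ‖fderiv ℝ u x‖ₑ ^ p ∂μ := by
  have hp₀ : 0 < p := one_pos.trans_le hp
  obtain ⟨e, he, hle⟩ := exists_norm_eq_one_map_eq_zero hE l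
  have hwidth (x : E) (hx : x ∈ Ω) (t : ℝ) (ht : x + t • e ∈ Ω) : t ≤ 2 * l (x - v) := calc
    t ≤ dist (x + t • e) x := by simpa [norm_smul, he] using le_abs_self t
    _ ≤ dist (x + t • e) v + dist x v := dist_triangle_right _ _ _
    _ ≤ l (x + t • e - v) + l (x - v) := add_le_add (hl _ ht) (hl x hx)
    _ = 2 * l (x - v) := by simp only [map_sub, map_add, map_smul, hle, smul_zero, add_zero]; ring
  have hdist (x : E) (hx : x ∈ Ω) : ENNReal.ofReal ((‖u x‖ / dist x v) ^ p) ≤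
      ENNReal.ofReal ((2 * ‖l‖) ^ p) * (‖u x‖ₑ / ENNReal.ofReal (2 * l (x - v))) ^ p := by
    refine ofReal_norm_div_rpow_le_mul_enorm_div_rpow (u x) dist_nonneg ?_ ?_ hp₀
    · linarith [hl x hx, dist_nonneg (x := x) (y := v)]
    · have hlx : l (x - v) ≤ ‖l‖ * dist x v := by
        simpa [dist_eq_norm] using (le_abs_self _).trans (l.le_opNorm (x - v))
      linarith
  calc ∫⁻ x in Ω, ENNReal.ofReal ((‖u x‖ / dist x v) ^ p) ∂μ
      ≤ ∫⁻ x in Ω, ENNReal.ofReal ((2 * ‖l‖) ^ p) *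
          (‖u x‖ₑ / ENNReal.ofReal (2 * l (x - v))) ^ p ∂μ :=
      setLIntegral_mono' hΩ.measurableSet hdist
    _ = ENNReal.ofReal ((2 * ‖l‖) ^ p) *
          ∫⁻ x in Ω, (‖u x‖ₑ / ENNReal.ofReal (2 * l (x - v))) ^ p ∂μ :=
      lintegral_const_mul' _ _ ENNReal.ofReal_ne_top
    _ ≤ ENNReal.ofReal ((2 * ‖l‖) ^ p) * ∫⁻ x in Ω, ‖fderiv ℝ u x e‖ₑ ^ p ∂μ := by
      refine mul_le_mul_right ?_ _
      exact lintegral_enorm_div_width_rpow_le hΩ huc hud hu₀ hp (by fun_prop)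
        (by simp [hle]) hwidth
    _ ≤ ENNReal.ofReal ((2 * ‖l‖) ^ p) * ∫⁻ x in Ω, ‖fderiv ℝ u x‖ₑ ^ p ∂μ := by
      gcongr with x
      simpa [← ofReal_norm, he] using ENNReal.ofReal_le_ofReal ((fderiv ℝ u x).le_opNorm e)

theorem lintegral_norm_div_infDist_rpow_le (hE : 1 < Module.finrank ℝ E) (hΩ : IsOpen Ω)
    (huc : ContinuousOn u (closure Ω)) (hud : DifferentiableOn ℝ u Ω)
    (hu₀ : ∀ x ∈ frontier Ω, u x = 0) (hp : 1 ≤ p) {S : Finset E} {l : E → E →L[ℝ] ℝ}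
    (hl : ∀ v ∈ S, ∀ x ∈ Ω, dist x v ≤ l v (x - v)) :
    ∫⁻ x in Ω, ENNReal.ofReal ((‖u x‖ / infDist x S) ^ p) ∂μ ≤
      ENNReal.ofReal (∑ v ∈ S, (2 * ‖l v‖) ^ p) * ∫⁻ x in Ω, ‖fderiv ℝ u x‖ₑ ^ p ∂μ := by
  have hmeas (v : E) : AEMeasurable (fun x => ENNReal.ofReal ((‖u x‖ / dist x v) ^ p))
      (μ.restrict Ω) :=
    (((hud.continuousOn.norm.aemeasurable hΩ.measurableSet).div
      (by fun_prop)).pow_const p).ennreal_ofReal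
  calc ∫⁻ x in Ω, ENNReal.ofReal ((‖u x‖ / infDist x S) ^ p) ∂μ
      ≤ ∫⁻ x in Ω, ∑ v ∈ S, ENNReal.ofReal ((‖u x‖ / dist x v) ^ p) ∂μ :=
      lintegral_mono fun x => ofReal_div_infDist_rpow_le_sum S x _ (one_pos.trans_le hp)
    _ = ∑ v ∈ S, ∫⁻ x in Ω, ENNReal.ofReal ((‖u x‖ / dist x v) ^ p) ∂μ :=
      lintegral_finsetSum' _ fun v _ => hmeas v
    _ ≤ ∑ v ∈ S, ENNReal.ofReal ((2 * ‖l v‖) ^ p) * ∫⁻ x in Ω, ‖fderiv ℝ u x‖ₑ ^ p ∂μ := by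
      gcongr with v hv
      exact lintegral_norm_div_dist_rpow_le hE hΩ huc hud hu₀ hp (hl v hv)
    _ = ENNReal.ofReal (∑ v ∈ S, (2 * ‖l v‖) ^ p) * ∫⁻ x in Ω, ‖fderiv ℝ u x‖ₑ ^ p ∂μ := by
      rw [← Finset.sum_mul, ENNReal.ofReal_sum_of_nonneg fun v _ => by positivity]

end Domain

theorem hardy_poincare_polygon_general {E G : Type*} [NormedAddCommGroup E] [NormedSpace ℝ E]
    [MeasurableSpace E] [BorelSpace E] [NormedAddCommGroup G] [NormedSpace ℝ G]
    [CompleteSpace G] (hE : 1 < Module.finrank ℝ E) (μ : Measure E)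
    [μ.IsAddHaarMeasure] {F : Set E} (hF : F.Finite) {Ω : Set E} (hΩ : IsOpen Ω)
    (hΩF : Ω ⊆ convexHull ℝ F) {p : ℝ} (hp : 1 ≤ p) :
    ∃ κ : ℝ, 0 < κ ∧ ∀ u : E → G,
      ContinuousOn u (closure Ω) → DifferentiableOn ℝ u Ω → (∀ x ∈ frontier Ω, u x = 0) →
      (∫⁻ x in Ω, ENNReal.ofReal
          ((‖u x‖ / infDist x ((convexHull ℝ F).extremePoints ℝ)) ^ p) ∂μ) +
        (∫⁻ x in Ω, ‖fderiv ℝ u x‖ₑ ^ p ∂μ) ≤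
      ENNReal.ofReal κ * ∫⁻ x in Ω, ‖fderiv ℝ u x‖ₑ ^ p ∂μ := by
  have : FiniteDimensional ℝ E := .of_finrank_pos (one_pos.trans hE)
  obtain ⟨S, hS⟩ := (hF.subset (extremePoints_convexHull_subset (𝕜 := ℝ))).exists_finset_coe
  have hcone (v : E) : ∃ l : E →L[ℝ] ℝ, v ∈ S → ∀ x ∈ Ω, dist x v ≤ l (x - v) := by
    by_cases hv : v ∈ S
    · obtain ⟨l, hl⟩ := exists_dist_le_map_sub_of_mem_extremePoints hF
        (hS ▸ Finset.mem_coe.2 hv)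
      exact ⟨l, fun _ x hx => hl x (hΩF hx)⟩
    · exact ⟨0, fun h => absurd h hv⟩
  choose l hl using hcone
  have hκ : 0 ≤ ∑ v ∈ S, (2 * ‖l v‖) ^ p := by positivity
  refine ⟨∑ v ∈ S, (2 * ‖l v‖) ^ p + 1, by positivity, fun u huc hud hu₀ => ?_⟩
  rw [ENNReal.ofReal_add hκ zero_le_one, ENNReal.ofReal_one, add_mul, one_mul, ← hS]
  gcongr
  exact lintegral_norm_div_infDist_rpow_le hE hΩ huc hud hu₀ hp hl

/-- Hardy–Poincaré inequality on a convex polygon in the plane, with weight the distance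
to the set of vertices (extreme points) of the polygon. -/
theorem hardy_poincare_polygon (F : Set (EuclideanSpace ℝ (Fin 2))) (hF : F.Finite)
    (hint : (interior (convexHull ℝ F)).Nonempty)
    (Ω : Set (EuclideanSpace ℝ (Fin 2))) (hΩ : Ω = interior (convexHull ℝ F))
    (S : Set (EuclideanSpace ℝ (Fin 2))) (hS : S = Set.extremePoints ℝ (closure Ω)) :
    ∃ κ : ℝ, 0 < κ ∧ ∀ u : EuclideanSpace ℝ (Fin 2) → ℝ,
      ContinuousOn u (closure Ω) → ContDiffOn ℝ 1 u Ω →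
      (∀ x ∈ frontier Ω, u x = 0) →
      (∫⁻ x in Ω, ENNReal.ofReal (u x ^ 2 / infDist x S ^ 2)) +
          (∫⁻ x in Ω, ENNReal.ofReal (‖gradient u x‖ ^ 2)) ≤
        ENNReal.ofReal κ * ∫⁻ x in Ω, ENNReal.ofReal (‖gradient u x‖ ^ 2) := by
  have hclosure : closure Ω = convexHull ℝ F := by
    rw [hΩ, (convex_convexHull ℝ F).closure_interior_eq_closure_of_nonempty_interior hint,
      (hF.isCompact_convexHull ℝ).isClosed.closure_eq]
  obtain ⟨κ, hκ, hardy⟩ := hardy_poincare_polygon_general (G := ℝ) (by simp) volume hF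
    (hΩ ▸ isOpen_interior) (hΩ ▸ interior_subset) one_le_two
  refine ⟨κ, hκ, fun u huc hud hu₀ => ?_⟩
  simpa [gradient, div_pow, ENNReal.ofReal_pow, hS, hclosure] using
    hardy u huc (hud.differentiableOn one_ne_zero) hu₀
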